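/- arXiv:2002.06613 — 2 statements merged into one kernel-verified Lean document; each statement's English description precedes it below -/
import Mathlib

section
/- Let Ă ∈ ℝ^{N×N}, B̆ ∈ ℝ^{N×M} with (Ă, B̆) controllable, let X_0 ∈ ℝ^N and a fixed sequence η_0, …, η_{ℓ-1} ∈ ℝ^N be given, and suppose ℓ > (1/2)MN² + (1/2)MN + M + 1. For inputs U_0, …, U_{ℓ-1} ∈ ℝ^M define X_{t+1} = Ă X_t + B̆ U_t + η_t for 0 ≤ t ≤ ℓ-1, and let D = [[X_{ℓ-1}, …, X_0]; [U_{ℓ-1}, …, U_0]] ∈ ℝ^{(N+M)×ℓ}. Then the set {(U_0^T, …, U_{ℓ-1}^T)^T ∈ ℝ^{Mℓ} : rank(D) < N+M} has Lebesgue measure zero in ℝ^{Mℓ}. -/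
open Matrix MeasureTheory

/-- The second-moment trajectory `X_{t+1} = Ă X_t + B̆ U_t + η_t` started at `X₀`. -/
noncomputable def trajEta {N M : ℕ} (Ab : Matrix (Fin N) (Fin N) ℝ)
    (Bb : Matrix (Fin N) (Fin M) ℝ) (X0 : Fin N → ℝ) (U : ℕ → Fin M → ℝ)
    (η : ℕ → Fin N → ℝ) : ℕ → Fin N → ℝ
  | 0 => X0
  | t + 1 => Ab *ᵥ trajEta Ab Bb X0 U η t + Bb *ᵥ U t + η t

/-- The controllability matrix `[B̆, ĂB̆, …, Ă^{N-1} B̆] ∈ ℝ^{N × NM}`. -/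
noncomputable def ctrbMat {N M : ℕ} (Ab : Matrix (Fin N) (Fin N) ℝ)
    (Bb : Matrix (Fin N) (Fin M) ℝ) : Matrix (Fin N) (Fin N × Fin M) ℝ :=
  Matrix.of fun i kj => (Ab ^ (kj.1 : ℕ) * Bb) i kj.2

/-- `(Ă, B̆)` is controllable if the controllability matrix has rank `N`. -/
def Controllable {N M : ℕ} (Ab : Matrix (Fin N) (Fin N) ℝ)
    (Bb : Matrix (Fin N) (Fin M) ℝ) : Prop :=
  (ctrbMat Ab Bb).rank = N

/-- The data matrix `D = [[X_{ℓ-1}, …, X_0]; [U_{ℓ-1}, …, U_0]] ∈ ℝ^{(N+M) × ℓ}` regarded as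
a function of the inputs `U_0, …, U_{ℓ-1}`: its column `c` (time index `ℓ - 1 - c = c.rev`)
stacks `X_{ℓ-1-c}` over `U_{ℓ-1-c}`. -/
noncomputable def Dmat {N M ℓ : ℕ} (Ab : Matrix (Fin N) (Fin N) ℝ)
    (Bb : Matrix (Fin N) (Fin M) ℝ) (X0 : Fin N → ℝ) (η : Fin ℓ → Fin N → ℝ)
    (U : Fin ℓ → Fin M → ℝ) : Matrix (Fin N ⊕ Fin M) (Fin ℓ) ℝ :=
  Matrix.of fun r c =>
    Sum.elim
      (fun i => trajEta Ab Bb X0 (fun t => if h : t < ℓ then U ⟨t, h⟩ else 0)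
        (fun t => if h : t < ℓ then η ⟨t, h⟩ else 0) c.rev i)
      (fun j => U c.rev j) r

theorem aux_affine {N M : ℕ} (Ab : Matrix (Fin N) (Fin N) ℝ)
    (Bb : Matrix (Fin N) (Fin M) ℝ) (X0 : Fin N → ℝ) (U V : ℕ → Fin M → ℝ)
    (η : ℕ → Fin N → ℝ) (s : ℝ) (t : ℕ) :
    trajEta Ab Bb X0 (fun t => U t + s • V t) η t =
      trajEta Ab Bb X0 U η t + s • trajEta Ab Bb 0 V 0 t := by
  induction t with
  | zero => simp [trajEta]
  | succ t ih =>
    simp only [trajEta, ih, Matrix.mulVec_add, Matrix.mulVec_smul, smul_add, Pi.zero_apply,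
      smul_zero, add_zero]
    abel

theorem aux_Daffine {N M ℓ : ℕ} (Ab : Matrix (Fin N) (Fin N) ℝ)
    (Bb : Matrix (Fin N) (Fin M) ℝ) (X0 : Fin N → ℝ) (η : Fin ℓ → Fin N → ℝ)
    (U V : Fin ℓ → Fin M → ℝ) (s : ℝ) :
    Dmat Ab Bb X0 η (U + s • V) = Dmat Ab Bb X0 η U + s • Dmat Ab Bb 0 0 V := by
  have h1 : (fun t => if h : t < ℓ then (U + s • V) ⟨t, h⟩ else 0) =
      fun t => (fun t => if h : t < ℓ then U ⟨t, h⟩ else 0) t +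
        s • (fun t => if h : t < ℓ then V ⟨t, h⟩ else 0) t := by
    funext t
    by_cases h : t < ℓ <;> simp [h]
  have h2 : (fun t => if h : t < ℓ then (0 : Fin ℓ → Fin N → ℝ) ⟨t, h⟩ else 0) = 0 := by
    funext t
    by_cases h : t < ℓ <;> simp [h]
  ext r c
  rcases r with i | j
  · simp only [Dmat, Matrix.of_apply, Sum.elim_inl, Matrix.add_apply, Matrix.smul_apply]
    rw [h1, aux_affine, h2]
    simp
  · simp [Dmat]

theorem aux_cont {N M : ℕ} (ℓ : ℕ) (Ab : Matrix (Fin N) (Fin N) ℝ)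
    (Bb : Matrix (Fin N) (Fin M) ℝ) (X0 : Fin N → ℝ) (η : ℕ → Fin N → ℝ) (t : ℕ) :
    Continuous (fun U : Fin ℓ → Fin M → ℝ =>
      trajEta Ab Bb X0 (fun t => if h : t < ℓ then U ⟨t, h⟩ else 0) η t) := by
  induction t with
  | zero => simpa [trajEta] using continuous_const
  | succ t ih =>
    simp only [trajEta]
    refine ((Continuous.matrix_mulVec continuous_const ih).add
      (Continuous.matrix_mulVec continuous_const ?_)).add continuous_const
    by_cases h : t < ℓ
    · simpa [h] using continuous_apply _
    · simpa [h] using continuous_const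

theorem aux_Dcont {N M ℓ : ℕ} (Ab : Matrix (Fin N) (Fin N) ℝ)
    (Bb : Matrix (Fin N) (Fin M) ℝ) (X0 : Fin N → ℝ) (η : Fin ℓ → Fin N → ℝ) :
    Continuous (fun U : Fin ℓ → Fin M → ℝ => Dmat Ab Bb X0 η U) := by
  refine continuous_matrix fun r c => ?_
  rcases r with i | j
  · exact (continuous_apply i).comp (aux_cont ℓ Ab Bb X0 _ c.rev)
  · simp only [Dmat, Matrix.of_apply, Sum.elim_inr]
    fun_prop

theorem aux_window {N M : ℕ} (A : Matrix (Fin N) (Fin N) ℝ) (B : Matrix (Fin N) (Fin M) ℝ)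
    (X : ℕ → Fin N → ℝ) (U : ℕ → Fin M → ℝ) (hX : ∀ t, X (t + 1) = A *ᵥ X t + B *ᵥ U t)
    (τ i : ℕ) (hU : ∀ k ≤ N, k ≠ i → U (τ + k) = 0) (k : ℕ) (hk : k ≤ N) :
    X (τ + k) = A ^ k *ᵥ X τ +
      if i < k then (A ^ (k - 1 - i) * B) *ᵥ U (τ + i) else 0 := by
  induction k with
  | zero => simp
  | succ k ih =>
    rw [← add_assoc, hX, ih (by omega), Matrix.mulVec_add, Matrix.mulVec_mulVec, ← pow_succ',
      add_assoc]
    congr 1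
    rcases lt_trichotomy i k with h | h | h
    · rw [if_pos h, if_pos (by omega), hU k (by omega) (by omega), Matrix.mulVec_mulVec,
        ← Matrix.mul_assoc, ← pow_succ']
      have : k - 1 - i + 1 = k + 1 - 1 - i := by omega
      rw [this]
      simp
    · subst h
      simp
    · rw [if_neg (by omega), if_neg (by omega), hU k (by omega) (by omega)]
      simp

theorem aux_ctrb {N M : ℕ} (A : Matrix (Fin N) (Fin N) ℝ) (B : Matrix (Fin N) (Fin M) ℝ)
    (h : Controllable A B) (p : Fin N → ℝ) (hp : ∀ m < N, p ᵥ* (A ^ m * B) = 0) : p = 0 := by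
  have hli : LinearIndependent ℝ (ctrbMat A B).row := by
    rw [linearIndependent_iff_card_eq_finrank_span, Set.finrank, ← Matrix.rank_eq_finrank_span_row]
    simpa using h.symm
  have hinj := Matrix.vecMul_injective_iff.2 hli
  apply hinj
  simp only [Matrix.zero_vecMul]
  funext kj
  exact congrFun (hp kj.1 kj.1.2) kj.2

theorem aux_key {N M ℓ : ℕ} (A : Matrix (Fin N) (Fin N) ℝ) (B : Matrix (Fin N) (Fin M) ℝ)
    (h : Controllable A B) (X : ℕ → Fin N → ℝ) (U : ℕ → Fin M → ℝ)
    (hX : ∀ t, X (t + 1) = A *ᵥ X t + B *ᵥ U t)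
    (hU : ∀ j : Fin M, ∀ i ≤ N, ∃ τ, τ + N < ℓ ∧ U (τ + i) = Pi.single j 1 ∧
      ∀ k ≤ N, k ≠ i → U (τ + k) = 0)
    (p : Fin N → ℝ) (q : Fin M → ℝ) (hY : ∀ t < ℓ, p ⬝ᵥ X t + q ⬝ᵥ U t = 0) :
    p = 0 ∧ q = 0 := by
  have hchi : ∑ k ∈ Finset.range (N + 1), A.charpoly.coeff k • A ^ k = 0 := by
    have := Matrix.aeval_self_charpoly A
    rwa [Polynomial.aeval_eq_sum_range, Matrix.charpoly_natDegree_eq_dim, Fintype.card_fin] at this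
  have htop : A.charpoly.coeff N = 1 := by
    have := A.charpoly_monic.coeff_natDegree
    rwa [Matrix.charpoly_natDegree_eq_dim, Fintype.card_fin] at this
  have main : ∀ j : Fin M, ∀ i ≤ N,
      ∑ k ∈ Finset.range (N + 1), A.charpoly.coeff k *
        ((if i < k then (p ᵥ* (A ^ (k - 1 - i) * B)) j else 0) + if k = i then q j else 0) = 0 := by
    intro j i hi
    obtain ⟨τ, hτ, hs, hz⟩ := hU j i hi
    have e1 : ∑ k ∈ Finset.range (N + 1), A.charpoly.coeff k *
        (p ⬝ᵥ X (τ + k) + q ⬝ᵥ U (τ + k)) = 0 :=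
      Finset.sum_eq_zero fun k hk => by
        rw [hY _ (by have := Finset.mem_range.1 hk; omega), mul_zero]
    have e2 : ∑ k ∈ Finset.range (N + 1), A.charpoly.coeff k * (p ⬝ᵥ (A ^ k *ᵥ X τ)) = 0 := by
      have : p ⬝ᵥ ((∑ k ∈ Finset.range (N + 1), A.charpoly.coeff k • A ^ k) *ᵥ X τ) = 0 := by
        rw [hchi]; simp
      rw [Matrix.sum_mulVec, dotProduct_sum] at this
      simpa [Matrix.smul_mulVec] using this
    have e3 := congrArg₂ (fun a b : ℝ => a - b) e1 e2
    simp only [sub_zero] at e3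
    rw [← Finset.sum_sub_distrib] at e3
    refine Eq.trans ?_ e3
    refine Finset.sum_congr rfl fun k hk => ?_
    have hkN : k ≤ N := by have := Finset.mem_range.1 hk; omega
    rw [aux_window A B X U hX τ i hz k hkN, dotProduct_add]
    have a1 : p ⬝ᵥ (if i < k then (A ^ (k - 1 - i) * B) *ᵥ U (τ + i) else 0) =
        if i < k then (p ᵥ* (A ^ (k - 1 - i) * B)) j else 0 := by
      split_ifs
      · rw [hs, Matrix.dotProduct_mulVec, dotProduct_single_one]
      · simp
    have a2 : q ⬝ᵥ U (τ + k) = if k = i then q j else 0 := by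
      split_ifs with hki
      · rw [hki, hs, dotProduct_single_one]
      · rw [hz k hkN hki]; simp
    rw [a1, a2]
    ring
  have hq : q = 0 := by
    funext j
    have := main j N le_rfl
    rw [Finset.sum_range_succ, Finset.sum_eq_zero] at this
    · simpa [htop] using this
    · intro k hk
      have := Finset.mem_range.1 hk
      rw [if_neg (by omega), if_neg (by omega)]; simp
  refine ⟨aux_ctrb A B h p ?_, hq⟩
  intro m
  induction m using Nat.strong_induction_on with
  | _ m ih =>
    intro hm
    funext j
    have := main j (N - 1 - m) (by omega)
    rw [Finset.sum_range_succ, Finset.sum_eq_zero] at this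
    · have e : N - 1 - (N - 1 - m) = m := by omega
      simpa [htop, hq, e, show N - 1 - m < N by omega] using this
    · intro k hk
      have := Finset.mem_range.1 hk
      by_cases hk' : N - 1 - m < k
      · rw [if_pos hk', ih (k - 1 - (N - 1 - m)) (by omega) (by omega)]; simp [hq]
      · simp [hk', hq]

theorem aux_exists {N M ℓ : ℕ} (A : Matrix (Fin N) (Fin N) ℝ)
    (B : Matrix (Fin N) (Fin M) ℝ) (hctrb : Controllable A B)
    (hℓ : 2 * ℓ > M * N ^ 2 + M * N + 2 * M + 2) :
    ∃ (V : Fin ℓ → Fin M → ℝ), ∀ w, w ᵥ* Dmat A B 0 0 V = 0 → w = 0 := by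
  refine ⟨fun t j => if (t : ℕ) = N + j * (N + 1) then 1 else 0, fun w hw => ?_⟩
  set V : Fin ℓ → Fin M → ℝ := fun t j => if (t : ℕ) = N + j * (N + 1) then 1 else 0 with hV
  set U : ℕ → Fin M → ℝ := fun t => if h : t < ℓ then V ⟨t, h⟩ else 0 with hUdef
  have h2 : (fun t => if h : t < ℓ then (0 : Fin ℓ → Fin N → ℝ) ⟨t, h⟩ else 0) = 0 := by
    funext t
    by_cases h : t < ℓ <;> simp [h]
  have hlen : ∀ j : Fin M, 2 * N + j * (N + 1) < ℓ := by
    intro j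
    have h1 : (j : ℕ) * (N + 1) + (N + 1) ≤ M * (N + 1) := by
      have := Nat.mul_le_mul_right (N + 1) (Nat.succ_le_of_lt j.2)
      nlinarith
    have hM : 1 ≤ M := by have := j.2; omega
    rcases N with _ | _ | n
    · omega
    · omega
    · nlinarith [Nat.mul_le_mul_right (n * n + 3 * n) hM]
  have key := aux_key (ℓ := ℓ) A B hctrb (trajEta A B 0 U 0) U (fun t => by simp [trajEta]) ?_
    (w ∘ Sum.inl) (w ∘ Sum.inr) ?_
  · funext r
    rcases r with i | j
    · exact congrFun key.1 i
    · exact congrFun key.2 j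
  · intro j i hi
    have hl := hlen j
    refine ⟨N + j * (N + 1) - i, by omega, ?_, ?_⟩
    · have e : N + (j : ℕ) * (N + 1) - i + i = N + j * (N + 1) := by omega
      rw [e]
      funext j'
      simp only [hUdef, hV]
      rw [dif_pos (by omega)]
      by_cases hj : j' = j
      · subst hj; simp
      · have : (j : ℕ) ≠ j' := fun h => hj (Fin.ext h.symm)
        simp [hj, this]
    · intro k hk hki
      funext j'
      simp only [hUdef, hV]
      rw [dif_pos (by omega)]
      simp only [Pi.zero_apply, ite_eq_right_iff, one_ne_zero, imp_false]
      intro e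
      rcases lt_trichotomy (j : ℕ) j' with h | h | h
      · have := Nat.mul_le_mul_right (N + 1) (Nat.succ_le_of_lt h)
        rw [Nat.succ_mul] at this
        omega
      · rw [h] at e; omega
      · have := Nat.mul_le_mul_right (N + 1) (Nat.succ_le_of_lt h)
        rw [Nat.succ_mul] at this
        omega
  · intro t ht
    have := congrFun hw (Fin.rev ⟨t, ht⟩)
    rw [Matrix.vecMul, dotProduct, Fintype.sum_sum_type] at this
    simp only [Dmat, Matrix.of_apply, Sum.elim_inl, Sum.elim_inr, Fin.rev_rev, h2] at this
    simp only [hUdef, dotProduct, dif_pos ht]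
    exact this

theorem Dmat_rank_deficient_null {N M ℓ : ℕ} (Ab : Matrix (Fin N) (Fin N) ℝ)
    (Bb : Matrix (Fin N) (Fin M) ℝ) (X0 : Fin N → ℝ) (η : Fin ℓ → Fin N → ℝ)
    (hctrb : Controllable Ab Bb)
    (hℓ : 2 * ℓ > M * N ^ 2 + M * N + 2 * M + 2) :
    volume {U : Fin ℓ → Fin M → ℝ | (Dmat Ab Bb X0 η U).rank < N + M} = 0 := by
  obtain ⟨V, hV⟩ := aux_exists Ab Bb hctrb hℓ
  obtain ⟨R, hR⟩ : ∃ R : Matrix (Fin ℓ) (Fin N ⊕ Fin M) ℝ, Dmat Ab Bb 0 0 V * R = 1 := by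
    set D := Dmat Ab Bb 0 0 V
    have hinj : Function.Injective D.vecMul := by
      intro a b hab
      exact sub_eq_zero.1 (hV _ (by rw [Matrix.sub_vecMul, sub_eq_zero]; exact hab))
    have hrk := (Matrix.vecMul_injective_iff.1 hinj).rank_matrix
    rw [← Matrix.mulVec_surjective_iff_exists_right_inverse]
    rw [Matrix.rank] at hrk
    have htop := Submodule.eq_top_of_finrank_eq (hrk.trans (Module.finrank_fintype_fun_eq_card ℝ).symm)
    exact LinearMap.range_eq_top.1 htop
  have hcont : Continuous fun U => (Dmat Ab Bb X0 η U * R).det :=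
    ((aux_Dcont Ab Bb X0 η).matrix_mul continuous_const).matrix_det
  have hopen : IsOpen {U | (Dmat Ab Bb X0 η U * R).det ≠ 0} :=
    isOpen_ne_fun hcont continuous_const
  have hae : ∀ᵐ U : Fin ℓ → Fin M → ℝ, U ∈ {U | (Dmat Ab Bb X0 η U * R).det ≠ 0} := by
    refine ae_mem_of_ae_add_linearMap_mem (LinearMap.toSpanSingleton ℝ _ V) volume volume
      hopen.measurableSet fun U => ?_
    have hfin : {s : ℝ | (-(Dmat Ab Bb X0 η U * R)).charpoly.IsRoot s}.Finite :=
      Polynomial.finite_setOf_isRoot (Matrix.charpoly_monic _).ne_zero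
    have h0 := hfin.measure_zero volume
    rw [measure_eq_zero_iff_ae_notMem] at h0
    filter_upwards [h0] with s hs
    simp only [Set.mem_setOf_eq, LinearMap.toSpanSingleton_apply] at hs ⊢
    rw [aux_Daffine, Matrix.add_mul, Matrix.smul_mul, hR]
    intro h
    apply hs
    rw [Polynomial.IsRoot, Matrix.eval_charpoly, ← h]
    congr 1
    rw [sub_neg_eq_add, add_comm, Matrix.smul_one_eq_diagonal]
    rfl
  refine measure_mono_null ?_ hae
  intro U hU
  simp only [Set.mem_setOf_eq, Set.mem_compl_iff, not_not] at hU ⊢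
  by_contra h
  have h1 := Matrix.rank_of_isUnit _ ((Matrix.isUnit_iff_isUnit_det _).2 (isUnit_iff_ne_zero.2 h))
  have h2 := Matrix.rank_mul_le_left (Dmat Ab Bb X0 η U) R
  simp at h1
  omega
end

section
/- Let N = n(n+1)/2 and M = m(m+1)/2, let Ă ∈ ℝ^{N×N}, B̆ ∈ ℝ^{N×M} with (Ă, B̆) controllable, let X_0 ∈ ℝ^N and a fixed sequence η_0, …, η_{ℓ-1} ∈ ℝ^N be given, and suppose ℓ ≥ (1/2)m²n⁴ + (1/2)m²n² + m² + 1 and ℓ > (1/2)MN² + (1/2)MN + M + 1. Let U_0, …, U_{ℓ-1} be random vectors in ℝ^M whose joint law on ℝ^{Mℓ} is absolutely continuous with respect to Lebesgue measure (as holds when the U_t are generated independently from non-degenerate distributions with densities, e.g., vectorized non-degenerate Wishart matrices). Define X_{t+1} = Ă X_t + B̆ U_t + η_t for 0 ≤ t ≤ ℓ-1 and D = [[X_{ℓ-1}, …, X_0]; [U_{ℓ-1}, …, U_0]] ∈ ℝ^{(N+M)×ℓ}. Then with probability one D has full row rank N+M, and consequently D D^T is invertible with probability one. -/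
open Matrix MeasureTheory

section helpers

open scoped ContDiff

/-- Reachable subspaces. -/
noncomputable def reachSub {N M : ℕ} (Ab : Matrix (Fin N) (Fin N) ℝ)
    (Bb : Matrix (Fin N) (Fin M) ℝ) : ℕ → Submodule ℝ (Fin N → ℝ)
  | 0 => ⊥
  | k + 1 => LinearMap.range Bb.mulVecLin ⊔ (reachSub Ab Bb k).map Ab.mulVecLin

variable {N M : ℕ} (Ab : Matrix (Fin N) (Fin N) ℝ) (Bb : Matrix (Fin N) (Fin M) ℝ)

lemma reachSub_succ_le (k : ℕ) : reachSub Ab Bb k ≤ reachSub Ab Bb (k + 1) := by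
  induction k with
  | zero => simp [reachSub]
  | succ k ih => exact sup_le_sup_left (Submodule.map_mono ih) _

lemma reachSub_mono : Monotone (reachSub Ab Bb) :=
  monotone_nat_of_le_succ (reachSub_succ_le Ab Bb)

lemma reachSub_mem (k : ℕ) (u : Fin M → ℝ) :
    (Ab ^ k) *ᵥ (Bb *ᵥ u) ∈ reachSub Ab Bb (k + 1) := by
  induction k with
  | zero =>
    simp only [pow_zero, one_mulVec]
    exact Submodule.mem_sup_left ⟨u, by simp⟩
  | succ k ih =>
    refine Submodule.mem_sup_right ⟨_, ih, ?_⟩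
    simp [pow_succ', Matrix.mulVec_mulVec, Matrix.mul_assoc]

lemma reachSub_le (k : ℕ) : ∀ (W : Submodule ℝ (Fin N → ℝ)),
    (∀ i < k, ∀ u : Fin M → ℝ, (Ab ^ i) *ᵥ (Bb *ᵥ u) ∈ W) → reachSub Ab Bb k ≤ W := by
  induction k with
  | zero => intro W _; simp [reachSub]
  | succ k ih =>
    intro W h
    refine sup_le ?_ ?_
    · rintro _ ⟨u, rfl⟩
      simpa using h 0 (by omega) u
    · rw [Submodule.map_le_iff_le_comap]
      refine ih _ fun i hi u => ?_
      have := h (i + 1) (by omega) u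
      simpa [pow_succ', Matrix.mulVec_mulVec, Matrix.mul_assoc] using this

lemma reachSub_top (hc : Controllable Ab Bb) : reachSub Ab Bb N = ⊤ := by
  unfold Controllable at hc
  rw [Matrix.rank_eq_finrank_span_cols] at hc
  have h1 : Submodule.span ℝ (Set.range (ctrbMat Ab Bb).col) = ⊤ :=
    Submodule.eq_top_of_finrank_eq (by simpa using hc)
  rw [eq_top_iff, ← h1, Submodule.span_le]
  rintro _ ⟨⟨k, j⟩, rfl⟩
  have h2 := reachSub_mono Ab Bb (show (k : ℕ) + 1 ≤ N from k.2)
    (reachSub_mem Ab Bb k (Pi.single j 1))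
  have h3 : (ctrbMat Ab Bb).col (k, j) = (Ab ^ (k : ℕ)) *ᵥ (Bb *ᵥ Pi.single j 1) := by
    rw [Matrix.mulVec_mulVec, Matrix.mulVec_single_one]
    rfl
  rw [h3]
  exact h2

lemma reachSub_stable (k : ℕ) (h : reachSub Ab Bb (k + 1) = reachSub Ab Bb k) (j : ℕ) :
    reachSub Ab Bb (k + j) = reachSub Ab Bb k := by
  induction j with
  | zero => rfl
  | succ j ih =>
    rw [← h, ← add_assoc]
    change _ ⊔ _ = _ ⊔ _
    rw [ih]

lemma reachSub_finrank (hc : Controllable Ab Bb) (k : ℕ) (hk : k ≤ N) :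
    k ≤ Module.finrank ℝ (reachSub Ab Bb k) := by
  induction k with
  | zero => simp
  | succ k ih =>
    by_cases h : reachSub Ab Bb (k + 1) = reachSub Ab Bb k
    · have h2 := reachSub_stable Ab Bb k h (N - k)
      rw [show k + (N - k) = N by omega, reachSub_top Ab Bb hc] at h2
      rw [h, ← h2]
      simpa using hk
    · have h3 : reachSub Ab Bb k < reachSub Ab Bb (k + 1) :=
        lt_of_le_of_ne (reachSub_succ_le Ab Bb k) (Ne.symm h)
      have := Submodule.finrank_lt_finrank_of_lt h3
      have := ih (by omega)
      omega

lemma traj_sub (X0 : Fin N → ℝ) (U U' : ℕ → Fin M → ℝ) (η : ℕ → Fin N → ℝ) (t : ℕ) :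
    trajEta Ab Bb X0 U η t - trajEta Ab Bb X0 U' η t
      = trajEta Ab Bb 0 (U - U') 0 t := by
  induction t with
  | zero => simp [trajEta]
  | succ t ih =>
    simp only [trajEta, ← ih, Matrix.mulVec_sub, Pi.sub_apply, Pi.zero_apply]
    abel

lemma traj_impulse (u : Fin M → ℝ) (t : ℕ) :
    trajEta Ab Bb 0 (Pi.single 0 u) 0 (t + 1) = (Ab ^ t) *ᵥ (Bb *ᵥ u) := by
  induction t with
  | zero => simp [trajEta]
  | succ t ih =>
    rw [trajEta, ih]
    simp [pow_succ', Matrix.mulVec_mulVec, Matrix.mul_assoc]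

lemma traj_congr (X0 : Fin N → ℝ) (U U' : ℕ → Fin M → ℝ) (η η' : ℕ → Fin N → ℝ) (t : ℕ)
    (hU : ∀ s < t, U s = U' s) (hη : ∀ s < t, η s = η' s) :
    trajEta Ab Bb X0 U η t = trajEta Ab Bb X0 U' η' t := by
  induction t with
  | zero => rfl
  | succ t ih =>
    rw [trajEta, trajEta, ih (fun s hs => hU s (by omega)) (fun s hs => hη s (by omega)),
      hU t (by omega), hη t (by omega)]

lemma traj_shift (X0 : Fin N → ℝ) (U : ℕ → Fin M → ℝ) (η : ℕ → Fin N → ℝ) (s t : ℕ) :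
    trajEta Ab Bb X0 U η (s + t) =
      trajEta Ab Bb (trajEta Ab Bb X0 U η s) (fun r => U (s + r)) (fun r => η (s + r)) t := by
  induction t with
  | zero => rfl
  | succ t ih => rw [← add_assoc, trajEta, ih, trajEta]

lemma escape (hc : Controllable Ab Bb) (X0 : Fin N → ℝ) (η : ℕ → Fin N → ℝ)
    (V : Submodule ℝ ((Fin N → ℝ) × (Fin M → ℝ))) (H : ℕ) (hH : H ≤ N)
    (hV : Module.finrank ℝ V < H + M) :
    ∃ (U : ℕ → Fin M → ℝ) (s : ℕ), s ≤ H ∧ (trajEta Ab Bb X0 U η s, U s) ∉ V := by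
  by_contra hcon
  push Not at hcon
  have hu : ∀ u : Fin M → ℝ, ((0 : Fin N → ℝ), u) ∈ V := by
    intro u
    have h1 := hcon (fun _ => u) 0 (by omega)
    have h2 := hcon (fun _ => 0) 0 (by omega)
    have := V.sub_mem h1 h2
    simpa [trajEta] using this
  have hx : reachSub Ab Bb H ≤ V.comap (LinearMap.inl ℝ _ _) := by
    refine reachSub_le Ab Bb H _ fun i hi u => ?_
    have h1 := hcon (Pi.single 0 u) (i + 1) (by omega)
    have h2 := hcon 0 (i + 1) (by omega)
    have := V.sub_mem h1 h2
    rw [Prod.mk_sub_mk, traj_sub, sub_zero, traj_impulse] at this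
    simpa using this
  let L : (reachSub Ab Bb H × (Fin M → ℝ)) →ₗ[ℝ] V :=
    LinearMap.codRestrict V
      (LinearMap.prodMap (reachSub Ab Bb H).subtype LinearMap.id) (by
        rintro ⟨⟨x, hx'⟩, u⟩
        have := V.add_mem (hx hx') (hu u)
        simpa using this)
  have hL : Function.Injective L := by
    rintro ⟨x, u⟩ ⟨x', u'⟩ h
    have h' := congrArg Subtype.val h
    simp only [L, LinearMap.codRestrict_apply, LinearMap.prodMap_apply, Prod.mk.injEq] at h'
    exact Prod.ext (Subtype.ext h'.1) h'.2
  have h1 := LinearMap.finrank_le_finrank_of_injective hL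
  have h2 := reachSub_finrank Ab Bb hc H hH
  rw [Module.finrank_prod] at h1
  simp only [Module.finrank_fin_fun] at h1
  omega

lemma exists_span (hc : Controllable Ab Bb) (c : ℕ) :
    ∀ (V : Submodule ℝ ((Fin N → ℝ) × (Fin M → ℝ))) (X0 : Fin N → ℝ) (η : ℕ → Fin N → ℝ)
      (k : ℕ), N + M ≤ Module.finrank ℝ V + c →
      (∑ i ∈ Finset.range c, ((N - i) + 1)) ≤ k →
      ∃ U : ℕ → Fin M → ℝ,
        V ⊔ Submodule.span ℝ ((fun s => (trajEta Ab Bb X0 U η s, U s)) '' Set.Iio k) = ⊤ := by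
  have hfin : Module.finrank ℝ ((Fin N → ℝ) × (Fin M → ℝ)) = N + M := by
    simp [Module.finrank_prod]
  induction c with
  | zero =>
    intro V X0 η k hV _
    have : V = ⊤ := Submodule.eq_top_of_finrank_eq (by
      have := Submodule.finrank_le V
      omega)
    exact ⟨0, by simp [this]⟩
  | succ c ih =>
    intro V X0 η k hV hk
    rw [Finset.sum_range_succ] at hk
    by_cases hV' : N + M ≤ Module.finrank ℝ V + c
    · exact ih V X0 η k hV' (by omega)
    obtain ⟨U, s, hs, hns⟩ := escape Ab Bb hc X0 η V (N - c) (by omega) (by omega)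
    set v : (Fin N → ℝ) × (Fin M → ℝ) := (trajEta Ab Bb X0 U η s, U s) with hv
    have hlt : V < V ⊔ Submodule.span ℝ {v} := by
      refine lt_of_le_of_ne le_sup_left fun h => hns ?_
      rw [h]
      exact Submodule.mem_sup_right (Submodule.mem_span_singleton_self v)
    have hlt' := Submodule.finrank_lt_finrank_of_lt hlt
    obtain ⟨U', hU'⟩ := ih (V ⊔ Submodule.span ℝ {v}) (trajEta Ab Bb X0 U η (s + 1))
      (fun r => η (s + 1 + r)) (k - (s + 1)) (by omega) (by omega)
    let U'' : ℕ → Fin M → ℝ := fun r => if r < s + 1 then U r else U' (r - (s + 1))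
    have e1 : ∀ t ≤ s + 1, trajEta Ab Bb X0 U'' η t = trajEta Ab Bb X0 U η t := fun t ht =>
      traj_congr Ab Bb X0 _ _ _ _ t
        (fun r hr => by simp only [U'']; rw [if_pos (by omega)]) (fun _ _ => rfl)
    have e2 : (fun r => U'' (s + 1 + r)) = U' := by
      funext r
      simp only [U'']
      rw [if_neg (by omega), Nat.add_sub_cancel_left]
    refine ⟨U'', ?_⟩
    rw [eq_top_iff, ← hU', sup_assoc]
    refine sup_le_sup_left (sup_le ?_ ?_) V
    · rw [Submodule.span_singleton_le_iff_mem]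
      refine Submodule.subset_span ⟨s, ?_, ?_⟩
      · simp only [Set.mem_Iio]; omega
      · have e3 : U'' s = U s := by simp [U'']
        simp only [hv, e1 s (by omega), e3]
    · refine Submodule.span_mono ?_
      rintro _ ⟨r, hr, rfl⟩
      simp only [Set.mem_Iio] at hr
      refine ⟨s + 1 + r, ?_, ?_⟩
      · simp only [Set.mem_Iio]; omega
      · simp only
        rw [traj_shift, e1 (s + 1) le_rfl, e2, ← congrFun e2 r]

lemma sum_bound (N M : ℕ) :
    2 * (∑ i ∈ Finset.range (N + M), ((N - i) + 1)) = 2 * (N + M) + N * (N + 1) := by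
  have h : ∀ N : ℕ, 2 * (∑ i ∈ Finset.range N, (N - i)) = N * (N + 1) := by
    intro N
    induction N with
    | zero => simp
    | succ N ih =>
      rw [Finset.sum_range_succ']
      simp only [Nat.add_sub_add_right, Nat.sub_zero]
      rw [mul_add, ih]
      ring
  have h1 : ∑ i ∈ Finset.range (N + M), (N - i) = ∑ i ∈ Finset.range N, (N - i) := by
    symm
    refine Finset.sum_subset (Finset.range_mono (by omega)) fun i _ hi => ?_
    simp only [Finset.mem_range] at hi
    omega
  rw [Finset.sum_add_distrib, h1, mul_add, h]
  simp
  ring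

lemma len_bound {n m N M ℓ : ℕ}
    (hN : 2 * N = n * (n + 1)) (hM : 2 * M = m * (m + 1)) (h0 : M = 0 → N = 0)
    (hℓ1 : 2 * ℓ ≥ m ^ 2 * n ^ 4 + m ^ 2 * n ^ 2 + 2 * m ^ 2 + 2)
    (hℓ2 : 2 * ℓ > M * N ^ 2 + M * N + 2 * M + 2) :
    2 * (N + M) + N * (N + 1) ≤ 2 * ℓ := by
  rcases Nat.lt_or_ge m 2 with hm | hm
  · interval_cases m
    · have hM0 : M = 0 := by omega
      have := h0 hM0
      subst hM0 this
      omega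
    · have hM1 : M = 1 := by omega
      subst hM1
      rcases Nat.lt_or_ge n 2 with hn | hn
      · interval_cases n
        · have : N = 0 := by omega
          subst this
          omega
        · have : N = 1 := by omega
          subst this
          omega
      · obtain ⟨k, rfl⟩ := Nat.exists_eq_add_of_le hn
        have h4 : 4 * (N * N) = ((2 + k) * (2 + k + 1)) ^ 2 := by
          rw [← hN]; ring
        ring_nf at h4 hN hℓ1 ⊢
        have : 0 ≤ k ^ 3 := by positivity
        have : 0 ≤ k ^ 4 := by positivity
        nlinarith
  · have hM3 : 3 ≤ M := by nlinarith
    obtain ⟨k, rfl⟩ := Nat.exists_eq_add_of_le hM3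
    have : 0 ≤ k * N ^ 2 := by positivity
    have : 0 ≤ k * N := by positivity
    nlinarith

lemma rank_iff {ℓ : ℕ} (D : Matrix (Fin N ⊕ Fin M) (Fin ℓ) ℝ) :
    D.rank = N + M ↔ (D * Dᵀ).det ≠ 0 := by
  rw [← Matrix.rank_self_mul_transpose, ← isUnit_iff_ne_zero, ← Matrix.isUnit_iff_isUnit_det]
  constructor
  · intro h
    rw [← Matrix.linearIndependent_cols_iff_isUnit, linearIndependent_iff_card_eq_finrank_span,
      Set.finrank, ← Matrix.rank_eq_finrank_span_cols, h]
    simp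
  · intro h
    rw [Matrix.rank_of_isUnit _ h]
    simp

lemma exists_good {ℓ : ℕ} (hc : Controllable Ab Bb) (X0 : Fin N → ℝ) (η : Fin ℓ → Fin N → ℝ)
    (hℓ : (∑ i ∈ Finset.range (N + M), ((N - i) + 1)) ≤ ℓ) :
    ∃ U : Fin ℓ → Fin M → ℝ, (Dmat Ab Bb X0 η U).rank = N + M := by
  obtain ⟨U, hU⟩ := exists_span Ab Bb hc (N + M) ⊥ X0
    (fun t => if h : t < ℓ then η ⟨t, h⟩ else 0) ℓ (by simp) hℓ
  refine ⟨fun t => U t, ?_⟩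
  set D := Dmat Ab Bb X0 η (fun t => U t) with hD
  rw [Matrix.rank_eq_finrank_span_cols]
  let e := LinearEquiv.sumArrowLequivProdArrow (Fin N) (Fin M) ℝ ℝ
  have : Submodule.span ℝ (Set.range D.col) = ⊤ := by
    rw [bot_sup_eq] at hU
    have h2 := congrArg (Submodule.map e.symm.toLinearMap) hU
    rw [Submodule.map_top, LinearEquiv.range, Submodule.map_span] at h2
    rw [eq_top_iff, ← h2, Submodule.span_le]
    rintro _ ⟨_, ⟨s, hs, rfl⟩, rfl⟩
    simp only [Set.mem_Iio] at hs
    refine Submodule.subset_span ⟨Fin.rev ⟨s, hs⟩, ?_⟩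
    have e1 := traj_congr Ab Bb X0 (fun t => if h : t < ℓ then U t else 0) U
      (fun t => if h : t < ℓ then η ⟨t, h⟩ else 0) _ s
      (fun r hr => by rw [dif_pos (by omega)]) (fun _ _ => rfl)
    have e4 : ℓ - (ℓ - (s + 1) + 1) = s := by omega
    ext r
    rcases r with i | j
    · simpa [e4, hD, Dmat, e, Matrix.col] using congrFun e1 i
    · simp [e4, hD, Dmat, e, Matrix.col]
  rw [this]
  simp

lemma contDiff_traj {ℓ : ℕ} (X0 : Fin N → ℝ) (η : ℕ → Fin N → ℝ) (t : ℕ) (i : Fin N) :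
    ContDiff ℝ ω fun U : Fin ℓ → Fin M → ℝ =>
      trajEta Ab Bb X0 (fun t => if h : t < ℓ then U ⟨t, h⟩ else 0) η t i := by
  induction t generalizing i with
  | zero => exact contDiff_const
  | succ t ih =>
    simp only [trajEta, Pi.add_apply, Matrix.mulVec, dotProduct]
    refine ((ContDiff.sum fun j _ => contDiff_const.mul (ih j)).add
      (ContDiff.sum fun j _ => contDiff_const.mul ?_)).add contDiff_const
    by_cases h : t < ℓ
    · simp only [h, dif_pos]
      fun_prop
    · simp only [h, dif_neg, not_false_eq_true]
      exact contDiff_const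

lemma contDiff_D {ℓ : ℕ} (X0 : Fin N → ℝ) (η : Fin ℓ → Fin N → ℝ) :
    ContDiff ℝ ω fun U : Fin ℓ → Fin M → ℝ =>
      (Dmat Ab Bb X0 η U * (Dmat Ab Bb X0 η U)ᵀ).det := by
  have h : ∀ r c, ContDiff ℝ ω fun U : Fin ℓ → Fin M → ℝ => Dmat Ab Bb X0 η U r c := by
    intro r c
    rcases r with i | j
    · exact contDiff_traj Ab Bb X0 _ _ i
    · simp only [Dmat, Matrix.of_apply, Sum.elim_inr]
      fun_prop
  simp only [Matrix.det_apply', Matrix.mul_apply, Matrix.transpose_apply]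
  exact ContDiff.sum fun σ _ => contDiff_const.mul <| contDiff_prod fun i _ =>
    ContDiff.sum fun c _ => (h _ _).mul (h _ _)

lemma ae_ne_zero_of_contDiff {E : Type*} [NormedAddCommGroup E] [NormedSpace ℝ E]
    [FiniteDimensional ℝ E] [MeasurableSpace E] [BorelSpace E] (μ : Measure E)
    [μ.IsAddHaarMeasure] (f : E → ℝ) (hf : ContDiff ℝ ω f) (x0 : E) (h0 : f x0 ≠ 0) :
    ∀ᵐ x ∂μ, f x ≠ 0 := by
  have hcont : Continuous fun p : E × ℝ => f (x0 + p.2 • p.1) :=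
    hf.continuous.comp (by fun_prop)
  have h1 : ∀ᵐ x ∂μ, ∀ᵐ t : ℝ, f (x0 + t • x) ≠ 0 := by
    refine Filter.Eventually.of_forall fun x => ?_
    have ha : ContDiff ℝ ω fun t : ℝ => f (x0 + t • x) := hf.comp (by fun_prop)
    have hb := AnalyticOnNhd.preimage_zero_mem_codiscrete (x := (0 : ℝ))
      (ha.analyticOnNhd (s := Set.univ)) (by simpa using h0)
    have := ae_restrict_le_codiscreteWithin (μ := (volume : Measure ℝ)) MeasurableSet.univ hb
    rw [Measure.restrict_univ] at this
    exact this
  have hm : MeasurableSet {p : E × ℝ | f (x0 + p.2 • p.1) ≠ 0} :=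
    (isOpen_ne_fun hcont continuous_const).measurableSet
  have h2 : ∀ᵐ t : ℝ, ∀ᵐ x ∂μ, f (x0 + t • x) ≠ 0 :=
    (Measure.ae_ae_comm hm).1 h1
  have h3 : ∀ᵐ t : ℝ, t ≠ 0 := by
    simp [ae_iff]
  obtain ⟨t, ht, ht0⟩ := (h2.and h3).exists
  have q1 := Measure.quasiMeasurePreserving_smul μ (inv_ne_zero ht0)
  have q2 := (quasiMeasurePreserving_add_left μ (-x0))
  have := (q1.comp q2).ae ht
  filter_upwards [this] with x hx
  simpa [smul_smul, ht0] using hx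

end helpers

/-- Let `N = n(n+1)/2`, `M = m(m+1)/2`, let `(Ă, B̆)` be controllable, let `X₀` and the
sequence `η_0, …, η_{ℓ-1}` be fixed, and suppose `ℓ ≥ (1/2)m²n⁴ + (1/2)m²n² + m² + 1`
and `ℓ > (1/2)MN² + (1/2)MN + M + 1` (both stated multiplied by `2`).  If the joint law of
the random inputs `U_0, …, U_{ℓ-1}` on `ℝ^{Mℓ}` is absolutely continuous with respect to
Lebesgue measure, then with probability one `D` has full row rank `N + M`, and consequently
`D Dᵀ` is invertible with probability one. -/
theorem Dmat_full_rank_as {Ω : Type*} [MeasureSpace Ω]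
    [IsProbabilityMeasure (volume : Measure Ω)] {n m N M ℓ : ℕ}
    (hN : 2 * N = n * (n + 1)) (hM : 2 * M = m * (m + 1))
    (Ab : Matrix (Fin N) (Fin N) ℝ) (Bb : Matrix (Fin N) (Fin M) ℝ)
    (X0 : Fin N → ℝ) (η : Fin ℓ → Fin N → ℝ)
    (hctrb : Controllable Ab Bb)
    (hℓ1 : 2 * ℓ ≥ m ^ 2 * n ^ 4 + m ^ 2 * n ^ 2 + 2 * m ^ 2 + 2)
    (hℓ2 : 2 * ℓ > M * N ^ 2 + M * N + 2 * M + 2)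
    (U : Ω → Fin ℓ → Fin M → ℝ) (hUmeas : Measurable U)
    (hac : Measure.map U volume ≪ (volume : Measure (Fin ℓ → Fin M → ℝ))) :
    ∀ᵐ ω, (Dmat Ab Bb X0 η (U ω)).rank = N + M ∧
      IsUnit (Dmat Ab Bb X0 η (U ω) * (Dmat Ab Bb X0 η (U ω))ᵀ) := by
  have h0 : M = 0 → N = 0 := by
    rintro rfl
    have h := hctrb
    unfold Controllable at h
    have := Matrix.rank_le_card_width (ctrbMat Ab Bb)
    rw [h] at this
    simpa using this
  have hb := len_bound hN hM h0 hℓ1 hℓ2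
  have hs := sum_bound N M
  obtain ⟨U0, hU0⟩ := exists_good Ab Bb hctrb X0 η (by omega)
  have hae := ae_ne_zero_of_contDiff (volume : Measure (Fin ℓ → Fin M → ℝ)) _
    (contDiff_D Ab Bb X0 η) U0 ((rank_iff _).1 hU0)
  have h2 := ae_of_ae_map hUmeas.aemeasurable (hac.ae_le hae)
  filter_upwards [h2] with ω hω
  refine ⟨(rank_iff _).2 hω, ?_⟩
  rw [Matrix.isUnit_iff_isUnit_det]
  exact isUnit_iff_ne_zero.2 hω
end
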